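/- Let S be a finite nonempty subset of the field 𝔽, and let the values Z_{i,j} (one for each edge of G) be chosen independently and uniformly at random from S; let SA_Z(G) denote the matrix over 𝔽[x] obtained from SA(G) by substituting Z_{i,j} for each variable z_{i,j}. Fix vertices u, v with ‖uv‖ < ∞. Then with probability at least 1 − n/|S| over the choice of the Z_{i,j}, deg*_x( adj(SA_Z(G))_{u,v} ) = ‖uv‖. -/

import Mathlib

/-- The length of a walk `p` (a list of vertices) in the weighted digraph with
weight function `W`, i.e. the sum of the weights of consecutive pairs. -/
def walkLen {V : Type*} (W : V → V → ℕ∞) (p : List V) : ℕ∞ :=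
  ((p.zip p.tail).map fun q => W q.1 q.2).sum

/-- `p` is a walk from `u` to `v`: it is nonempty, starts at `u`, ends at `v`,
and every consecutive pair is an edge (finite weight). -/
def IsWalk {V : Type*} (W : V → V → ℕ∞) (u v : V) (p : List V) : Prop :=
  p.head? = some u ∧ p.getLast? = some v ∧ p.Chain' fun x y => W x y ≠ ⊤

/-- The distance from `u` to `v`: the infimum of lengths of walks from `u` to `v`
(`⊤` if there is no walk). -/
noncomputable def gdist {V : Type*} (W : V → V → ℕ∞) (u v : V) : ℕ∞ :=
  sInf {d | ∃ p, IsWalk W u v p ∧ walkLen W p = d}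

/-- `p` is a shortest path from `u` to `v`: a walk from `u` to `v` whose length
equals the distance. -/
def IsShortestPath {V : Type*} (W : V → V → ℕ∞) (u v : V) (p : List V) : Prop :=
  IsWalk W u v p ∧ walkLen W p = gdist W u v

/-- The symbolic adjacency matrix of the digraph on `Fin n` with weight function `W`
(`W i j = ⊤` meaning no edge), with the variable `z_{i,j}` substituted by the field
element `Z (i, j)`; a matrix over `𝔽[x]`. -/
noncomputable def symbAdjZ {F : Type*} [Field F] {n : ℕ} (W : Fin n → Fin n → ℕ∞)
    (Z : Fin n × Fin n → F) : Matrix (Fin n) (Fin n) (Polynomial F) :=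
  fun i j =>
    if i = j then 1
    else if W i j ≠ ⊤ then
      Polynomial.C (Z (i, j)) * Polynomial.X ^ (W i j).toNat
    else 0

/-!
Conjugating the symbolic adjacency matrix `A` by `D = diag (x ^ p i)` replaces each weight `W i j`
by `W i j + p j - p i`, which is nonnegative when `p` is a potential; since `det D` is a power of
`x`, the same conjugation relates the adjugates. For `p` take the distance to `v`, truncated at the
distance `d` from `u` to `v`. Then `adj(A)_{u,v} = x ^ d * adj(B)_{u,v}`, where `B` is the
reweighted matrix, for which `u` is at distance `0` from `v`. So `deg* adj(A)_{u,v} = d` as soon as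
the constant coefficient of `adj(B)_{u,v}` does not vanish. This coefficient is the `(u,v)` entry of
the adjugate of the matrix of weight-zero edges, a polynomial in the `z_{i,j}` of degree less than
the number of vertices. It is not the zero polynomial: substitute values supported on a forest of
weight-zero edges leading to `v`. The Schwartz–Zippel lemma concludes.
-/

section Distance

variable {V : Type*} {W : V → V → ℕ∞} {u v : V}

theorem isWalk_singleton (W : V → V → ℕ∞) (v : V) : IsWalk W v v [v] :=
  ⟨rfl, rfl, .singleton v⟩

theorem walkLen_singleton (W : V → V → ℕ∞) (v : V) : walkLen W [v] = 0 := by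
  simp [walkLen]

theorem isWalk_cons_cons {j : V} {l : List V} :
    IsWalk W u v (u :: j :: l) ↔ W u j ≠ ⊤ ∧ IsWalk W j v (j :: l) := by
  constructor
  · rintro ⟨-, hlast, hchain⟩
    obtain ⟨hj, hl⟩ := List.isChain_cons_cons.mp hchain
    exact ⟨hj, rfl, hlast, hl⟩
  · rintro ⟨hj, -, hlast, hl⟩
    exact ⟨rfl, hlast, List.isChain_cons_cons.mpr ⟨hj, hl⟩⟩

theorem walkLen_cons_cons (W : V → V → ℕ∞) (u j : V) (l : List V) :
    walkLen W (u :: j :: l) = W u j + walkLen W (j :: l) := by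
  simp [walkLen]

theorem IsWalk.eq_cons {q : List V} (hq : IsWalk W u v q) : ∃ l, q = u :: l :=
  List.head?_eq_some_iff.mp hq.1

theorem IsWalk.eq_singleton_or_cons_cons {q : List V} (hq : IsWalk W u v q) :
    (u = v ∧ q = [u]) ∨
      ∃ j l, q = u :: j :: l ∧ W u j ≠ ⊤ ∧ IsWalk W j v (j :: l) := by
  obtain ⟨_ | ⟨j, l⟩, rfl⟩ := hq.eq_cons
  · exact .inl ⟨by simpa using hq.2.1, rfl⟩
  · exact .inr ⟨j, l, rfl, isWalk_cons_cons.mp hq⟩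

theorem gdist_le_walkLen {q : List V} (hq : IsWalk W u v q) : gdist W u v ≤ walkLen W q :=
  sInf_le ⟨q, hq, rfl⟩

theorem exists_isShortestPath (h : gdist W u v ≠ ⊤) : ∃ q, IsShortestPath W u v q := by
  have hne : {d | ∃ q, IsWalk W u v q ∧ walkLen W q = d}.Nonempty := by
    contrapose! h
    rw [gdist, h, sInf_empty]
  exact csInf_mem hne

theorem gdist_self (W : V → V → ℕ∞) (v : V) : gdist W v v = 0 :=
  nonpos_iff_eq_zero.mp <|
    (gdist_le_walkLen (isWalk_singleton W v)).trans_eq (walkLen_singleton W v)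

theorem gdist_le_weight_add_gdist (W : V → V → ℕ∞) (u j v : V) :
    gdist W u v ≤ W u j + gdist W j v := by
  by_cases hW : W u j = ⊤
  · simp [hW]
  by_cases hd : gdist W j v = ⊤
  · simp [hd]
  obtain ⟨q, hq, hlen⟩ := exists_isShortestPath hd
  obtain ⟨l, rfl⟩ := hq.eq_cons
  rw [← hlen, ← walkLen_cons_cons]
  exact gdist_le_walkLen (isWalk_cons_cons.mpr ⟨hW, hq⟩)

theorem exists_next_of_gdist_eq_zero (W : V → V → ℕ∞) (v : V) :
    ∃ (next : V → V) (rank : V → ℕ), ∀ i, gdist W i v = 0 → i ≠ v →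
      W i (next i) = 0 ∧ gdist W (next i) v = 0 ∧ rank (next i) < rank i := by
  -- `next i` is the second vertex of a zero-length walk to `v` with as few vertices as possible:
  -- the weight alone does not decrease along such a walk.
  let lengths (i : V) : Set ℕ := {m | ∃ q, IsWalk W i v q ∧ walkLen W q = 0 ∧ q.length = m}
  have step (i : V) (hi : gdist W i v = 0) (hiv : i ≠ v) :
      ∃ j, W i j = 0 ∧ gdist W j v = 0 ∧ sInf (lengths j) < sInf (lengths i) := by
    have hne : (lengths i).Nonempty := by
      obtain ⟨q, hq, hlen⟩ := exists_isShortestPath (W := W) (u := i) (v := v) (by simp [hi])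
      exact ⟨_, q, hq, hlen.trans hi, rfl⟩
    obtain ⟨q, hq, hlen, hmin⟩ := Nat.sInf_mem hne
    obtain ⟨hiv', -⟩ | ⟨j, l, rfl, -, hl⟩ := hq.eq_singleton_or_cons_cons
    · exact absurd hiv' hiv
    rw [walkLen_cons_cons, add_eq_zero] at hlen
    refine ⟨j, hlen.1, nonpos_iff_eq_zero.mp ((gdist_le_walkLen hl).trans_eq hlen.2), ?_⟩
    calc sInf (lengths j) ≤ (j :: l).length := Nat.sInf_le ⟨_, hl, hlen.2, rfl⟩
      _ < (i :: j :: l).length := Nat.lt_succ_self _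
      _ = sInf (lengths i) := hmin
  have : Nonempty V := ⟨v⟩
  choose! next hnext using step
  exact ⟨next, fun i => sInf (lengths i), hnext⟩

end Distance

section Potential

variable {V : Type*} {W : V → V → ℕ∞} {p : V → ℕ} {u v : V}

/-- A (feasible) potential for the weights `W`: a vertex function which drops by at most `W i j`
along each edge `(i, j)`. -/
def IsPotential (W : V → V → ℕ∞) (p : V → ℕ) : Prop :=
  ∀ i j, (p i : ℕ∞) ≤ W i j + p j

/-- Johnson's reweighting of `W` by `p`. The subtraction in `ℕ∞` is truncated, which has no effect
if `p` is a potential. -/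
def reweight (W : V → V → ℕ∞) (p : V → ℕ) (i j : V) : ℕ∞ :=
  W i j + p j - p i

theorem exists_isPotential_eq_gdist (h : gdist W u v ≠ ⊤) :
    ∃ p, IsPotential W p ∧ p v = 0 ∧ (p u : ℕ∞) = gdist W u v := by
  let trunc (i : V) : ℕ∞ := min (gdist W i v) (gdist W u v)
  have coe_toNat (i : V) : ((trunc i).toNat : ℕ∞) = trunc i :=
    ENat.natCast_toNat (ne_top_of_le_ne_top h (min_le_right _ _))
  refine ⟨fun i => (trunc i).toNat, fun i j => ?_, ?_, ?_⟩
  · rw [coe_toNat, coe_toNat, add_min]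
    exact min_le_min (gdist_le_weight_add_gdist W i j v) le_add_self
  · simp [trunc, gdist_self]
  · exact (coe_toNat u).trans (min_self _)

theorem reweight_ne_top_iff {i j : V} : reweight W p i j ≠ ⊤ ↔ W i j ≠ ⊤ := by
  simp [reweight, ENat.sub_eq_top_iff]

theorem IsPotential.reweight_add (hp : IsPotential W p) (i j : V) :
    reweight W p i j + p i = W i j + p j :=
  tsub_add_cancel_of_le (hp i j)

theorem isWalk_reweight_iff {q : List V} : IsWalk (reweight W p) u v q ↔ IsWalk W u v q := by
  simp only [IsWalk, reweight_ne_top_iff]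

theorem IsPotential.walkLen_reweight_add (hp : IsPotential W p) {q : List V}
    (hq : IsWalk W u v q) : walkLen (reweight W p) q + p u = walkLen W q + p v := by
  induction q generalizing u with
  | nil => simp [IsWalk] at hq
  | cons a l ih =>
    obtain ⟨rfl, hl⟩ | ⟨j, l', hcons, -, hl'⟩ := hq.eq_singleton_or_cons_cons
    · simp only [hl, walkLen_singleton]
    · obtain ⟨rfl, rfl⟩ := List.cons.inj hcons
      calc walkLen (reweight W p) (a :: j :: l') + p a
          = (reweight W p a j + p a) + walkLen (reweight W p) (j :: l') := by
            rw [walkLen_cons_cons, add_right_comm]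
        _ = W a j + (walkLen (reweight W p) (j :: l') + p j) := by
            rw [hp.reweight_add, add_assoc, add_comm (p j : ℕ∞)]
        _ = walkLen W (a :: j :: l') + p v := by
            rw [ih hl', walkLen_cons_cons, add_assoc]

theorem IsPotential.gdist_reweight_eq_zero (hp : IsPotential W p) (hv : p v = 0)
    (hu : (p u : ℕ∞) = gdist W u v) : gdist (reweight W p) u v = 0 := by
  obtain ⟨q, hq, hlen⟩ := exists_isShortestPath (hu ▸ ENat.natCast_ne_top (p u))
  have hzero : walkLen (reweight W p) q = 0 := by
    have h := hp.walkLen_reweight_add hq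
    rw [hv, Nat.cast_zero, add_zero, hlen, ← hu] at h
    exact ENat.add_left_injective_of_ne_top (ENat.natCast_ne_top (p u))
      (h.trans (zero_add _).symm)
  exact nonpos_iff_eq_zero.mp ((gdist_le_walkLen (isWalk_reweight_iff.mpr hq)).trans_eq hzero)

end Potential

section Adjugate

variable {V R : Type*} [Fintype V] [DecidableEq V] [CommRing R] {u v : V}

theorem semiconjBy_adjugate {D A B : Matrix V V R} (hD : IsLeftRegular D.det)
    (h : SemiconjBy D B A) : SemiconjBy D B.adjugate A.adjugate := by
  have hadj : D.adjugate * A.adjugate = B.adjugate * D.adjugate := by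
    rw [← Matrix.adjugate_mul_distrib, ← Matrix.adjugate_mul_distrib, h.eq]
  have hdet : D.det • (D * B.adjugate) = D.det • (A.adjugate * D) :=
    calc D.det • (D * B.adjugate) = D * (B.adjugate * D.adjugate) * D := by
          rw [Matrix.mul_assoc, Matrix.mul_assoc, Matrix.adjugate_mul, Matrix.mul_smul,
            Matrix.mul_one, Matrix.mul_smul]
      _ = D.det • (A.adjugate * D) := by
          rw [← hadj, ← Matrix.mul_assoc, Matrix.mul_adjugate, Matrix.smul_mul, Matrix.one_mul,
            Matrix.smul_mul]
  ext i j
  exact hD (congrFun₂ hdet i j)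

theorem adjugate_apply_ne_zero_of_mulVec_eq_single [IsDomain R] {M : Matrix V V R} {y : V → R}
    (hM : ∀ x, M.mulVec x = 0 → x = 0) (hy : M.mulVec y = Pi.single v 1) (hu : y u ≠ 0) :
    M.adjugate u v ≠ 0 := by
  have hdet : M.det ≠ 0 := fun h => by
    obtain ⟨x, hx, hMx⟩ := Matrix.exists_mulVec_eq_zero_iff.mpr h
    exact hx (hM x hMx)
  have hcol : M.adjugate u v = M.det * y u := by
    have h := congrArg (fun x => M.adjugate.mulVec x u) hy
    simpa [Matrix.mulVec_mulVec, Matrix.adjugate_mul, Matrix.smul_mulVec] using h.symm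
  exact hcol ▸ mul_ne_zero hdet hu

theorem totalDegree_det_le {σ : Type*} {M : Matrix V V (MvPolynomial σ R)} {d : V → ℕ}
    (hM : ∀ i j, (M i j).totalDegree ≤ d i) : M.det.totalDegree ≤ ∑ i, d i := by
  rw [Matrix.det_apply]
  refine MvPolynomial.totalDegree_finsetSum_le fun τ _ => ?_
  calc (Equiv.Perm.sign τ • ∏ i, M (τ i) i).totalDegree
      ≤ (∏ i, M (τ i) i).totalDegree := MvPolynomial.totalDegree_smul_le _ _
    _ ≤ ∑ i, (M (τ i) i).totalDegree := MvPolynomial.totalDegree_finsetProd _ _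
    _ ≤ ∑ i, d (τ i) := Finset.sum_le_sum fun i _ => hM (τ i) i
    _ = ∑ i, d i := Equiv.sum_comp τ d

theorem totalDegree_adjugate_lt_card {σ : Type*} {M : Matrix V V (MvPolynomial σ R)}
    (hM : ∀ i j, (M i j).totalDegree ≤ 1) (u v : V) :
    (M.adjugate u v).totalDegree < Fintype.card V := by
  have hrow (i j : V) :
      (M.updateRow v (Pi.single u 1) i j).totalDegree ≤ if i ≠ v then 1 else 0 := by
    rw [Matrix.updateRow_apply]
    by_cases hi : i = v
    · rw [if_pos hi, Pi.single_apply]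
      split_ifs <;> simp
    · simpa only [if_neg hi, if_pos hi] using hM i j
  calc (M.adjugate u v).totalDegree ≤ ∑ i, if i ≠ v then 1 else 0 := by
        rw [Matrix.adjugate_apply]
        exact totalDegree_det_le hrow
    _ = (Finset.univ.filter (· ≠ v)).card := by rw [Finset.sum_boole, Nat.cast_id]
    _ < Fintype.card V := Finset.card_lt_univ_of_notMem (x := v) (by simp)

end Adjugate

section SymbolicAdjacencyMatrix

open Polynomial

variable {V R : Type*} [DecidableEq V] [CommRing R]

/-- The symbolic adjacency matrix of a digraph on an arbitrary vertex type, with the variables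
replaced by elements of a commutative ring; it extends `symbAdjZ`. -/
noncomputable def symbAdj (W : V → V → ℕ∞) (Z : V × V → R) : Matrix V V R[X] :=
  fun i j =>
    if i = j then 1
    else if W i j ≠ ⊤ then C (Z (i, j)) * X ^ (W i j).toNat
    else 0

/-- The constant coefficients of the symbolic adjacency matrix for nonnegative weights: only the
edges of weight zero remain. -/
def zeroWeightMatrix (W : V → V → ℕ∞) (Z : V × V → R) : Matrix V V R :=
  fun i j =>
    if i = j then 1
    else if W i j = 0 then Z (i, j)
    else 0

theorem constantCoeff_map_symbAdj (W : V → V → ℕ∞) (Z : V × V → R) :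
    (symbAdj W Z).map constantCoeff = zeroWeightMatrix W Z := by
  ext i j
  simp only [symbAdj, zeroWeightMatrix, Matrix.map_apply, apply_ite constantCoeff]
  cases W i j <;> simp [coeff_X_pow, eq_comm]

theorem map_zeroWeightMatrix {R' : Type*} [CommRing R'] (f : R →+* R') (W : V → V → ℕ∞)
    (Z : V × V → R) : (zeroWeightMatrix W Z).map f = zeroWeightMatrix W (f ∘ Z) := by
  ext i j
  simp only [zeroWeightMatrix, Matrix.map_apply, apply_ite f, map_one, map_zero,
    Function.comp_apply]

theorem totalDegree_zeroWeightMatrix_X_le [Nontrivial R] (W : V → V → ℕ∞) (i j : V) :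
    (zeroWeightMatrix W (MvPolynomial.X (R := R)) i j).totalDegree ≤ 1 := by
  unfold zeroWeightMatrix
  split_ifs <;> simp

variable [Fintype V]

theorem IsPotential.semiconjBy_symbAdj {W : V → V → ℕ∞} {p : V → ℕ} (hp : IsPotential W p)
    (Z : V × V → R) :
    SemiconjBy (Matrix.diagonal fun i => (X : R[X]) ^ p i) (symbAdj (reweight W p) Z)
      (symbAdj W Z) := by
  ext i j : 2
  rw [Matrix.diagonal_mul, Matrix.mul_diagonal]
  by_cases hij : i = j
  · simp [symbAdj, hij]
  by_cases hW : W i j = ⊤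
  · simp [symbAdj, hij, hW, reweight]
  have hexp : p i + (reweight W p i j).toNat = (W i j).toNat + p j := by
    have h := congrArg ENat.toNat (hp.reweight_add i j)
    rwa [ENat.toNat_add (reweight_ne_top_iff.mpr hW) (ENat.natCast_ne_top _),
      ENat.toNat_add hW (ENat.natCast_ne_top _), ENat.toNat_natCast, ENat.toNat_natCast,
      add_comm] at h
  simp only [symbAdj, if_neg hij, if_pos hW, if_pos (reweight_ne_top_iff.mpr hW)]
  rw [mul_left_comm, ← pow_add, hexp, pow_add, mul_assoc]

theorem IsPotential.adjugate_symbAdj_apply {W : V → V → ℕ∞} {p : V → ℕ} (hp : IsPotential W p)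
    (Z : V × V → R) (u : V) {v : V} (hv : p v = 0) :
    (symbAdj W Z).adjugate u v = X ^ p u * (symbAdj (reweight W p) Z).adjugate u v := by
  have hdet : IsLeftRegular (Matrix.diagonal fun i => (X : R[X]) ^ p i).det := by
    rw [Matrix.det_diagonal, Finset.prod_pow_eq_pow_sum]
    exact (isRegular_X_pow _).left
  have h := congrFun₂ (semiconjBy_adjugate hdet (hp.semiconjBy_symbAdj Z)).eq u v
  rw [Matrix.diagonal_mul, Matrix.mul_diagonal, hv, pow_zero, mul_one] at h
  exact h.symm

theorem coeff_zero_adjugate_symbAdj (W : V → V → ℕ∞) (Z : V × V → R) (u v : V) :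
    ((symbAdj W Z).adjugate u v).coeff 0 = (zeroWeightMatrix W Z).adjugate u v := by
  rw [← constantCoeff_map_symbAdj, ← RingHom.mapMatrix_apply, ← RingHom.map_adjugate]
  rfl

theorem eval_adjugate_zeroWeightMatrix_X (W : V → V → ℕ∞) (Z : V × V → R) (u v : V) :
    MvPolynomial.eval Z ((zeroWeightMatrix W MvPolynomial.X).adjugate u v) =
      (zeroWeightMatrix W Z).adjugate u v := by
  have hmap : (zeroWeightMatrix W MvPolynomial.X).map (MvPolynomial.eval Z) =
      zeroWeightMatrix W Z := by
    rw [map_zeroWeightMatrix]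
    exact congrArg _ (funext fun e => MvPolynomial.eval_X e)
  rw [← hmap, ← RingHom.mapMatrix_apply, ← RingHom.map_adjugate]
  rfl

theorem IsPotential.trailingDegree_adjugate_symbAdj [IsDomain R] {W : V → V → ℕ∞} {p : V → ℕ}
    (hp : IsPotential W p) {Z : V × V → R} {u v : V} (hv : p v = 0)
    (hZ : (zeroWeightMatrix (reweight W p) Z).adjugate u v ≠ 0) :
    ((symbAdj W Z).adjugate u v).trailingDegree = p u := by
  have hzero : ((symbAdj (reweight W p) Z).adjugate u v).trailingDegree = 0 :=
    trailingDegree_eq_zero.mpr (coeff_zero_adjugate_symbAdj (reweight W p) Z u v ▸ hZ)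
  rw [hp.adjugate_symbAdj_apply Z u hv, trailingDegree_mul, trailingDegree_X_pow, hzero, add_zero]

/-- The substitution of `-1` for the edges `(i, next i)` with `active i`, and of `0` for all others.
With this sign, row `i` of the matrix compares the values of a vector at `i` and at `next i`. -/
def forestValues (R : Type*) [CommRing R] (active : V → Prop) [DecidablePred active]
    (next : V → V) (e : V × V) : R :=
  if active e.1 ∧ e.2 = next e.1 then -1 else 0

theorem zeroWeightMatrix_forestValues_mulVec {W : V → V → ℕ∞} {active : V → Prop}
    [DecidablePred active] {next : V → V} (hW : ∀ i, active i → W i (next i) = 0)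
    (hne : ∀ i, active i → next i ≠ i) (x : V → R) (i : V) :
    (zeroWeightMatrix W (forestValues R active next)).mulVec x i =
      if active i then x i - x (next i) else x i := by
  have hrow : zeroWeightMatrix W (forestValues R active next) i =
      Pi.single i 1 - if active i then Pi.single (next i) 1 else 0 := by
    ext j
    by_cases hi : active i
    · rcases eq_or_ne i j with rfl | hij
      · simp [zeroWeightMatrix, hi, (hne i hi).symm]
      · rcases eq_or_ne j (next i) with rfl | hj
        · simp [zeroWeightMatrix, forestValues, hi, hW i hi, hij]
        · simp [zeroWeightMatrix, forestValues, hi, hij, hij.symm, hj]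
    · simp [zeroWeightMatrix, forestValues, hi, Pi.single_apply, eq_comm]
  rw [Matrix.mulVec, hrow, sub_dotProduct]
  split_ifs <;> simp

/-- Up to the determinant, column `v` of the adjugate is the indicator function of the vertices at
distance `0` from `v`, once `forestValues` is supported on a forest of zero-length walks to `v`. -/
theorem exists_adjugate_zeroWeightMatrix_ne_zero [IsDomain R] {W : V → V → ℕ∞} {u v : V}
    (huv : gdist W u v = 0) :
    ∃ Z : V × V → R, (zeroWeightMatrix W Z).adjugate u v ≠ 0 := by
  classical
  obtain ⟨next, rank, hnext⟩ := exists_next_of_gdist_eq_zero W v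
  let active (i : V) : Prop := gdist W i v = 0 ∧ i ≠ v
  have hrank (i : V) (hi : active i) : rank (next i) < rank i := (hnext i hi.1 hi.2).2.2
  have hmulVec (x : V → R) (i : V) :
      (zeroWeightMatrix W (forestValues R active next)).mulVec x i =
        if active i then x i - x (next i) else x i :=
    zeroWeightMatrix_forestValues_mulVec (fun i hi => (hnext i hi.1 hi.2).1)
      (fun i hi h => (hrank i hi).ne (congrArg rank h)) x i
  refine ⟨forestValues R active next, adjugate_apply_ne_zero_of_mulVec_eq_single
    (y := fun i => if gdist W i v = 0 then 1 else 0) (fun x hx => ?_) (funext fun i => ?_) ?_⟩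
  · have hx_zero (m : ℕ) : ∀ i, rank i = m → x i = 0 := by
      induction m using Nat.strong_induction_on with
      | _ m ih =>
        rintro i rfl
        have hxi := (hmulVec x i).symm.trans (congrFun hx i)
        split_ifs at hxi with hi
        · rw [ih _ (hrank i hi) _ rfl, sub_zero] at hxi
          exact hxi
        · exact hxi
    exact funext fun i => hx_zero _ i rfl
  · rw [hmulVec]
    by_cases hi : active i
    · simp [hi, hi.1, hi.2, (hnext i hi.1 hi.2).2.1]
    · by_cases hiv : i = v
      · simp [active, hiv, gdist_self]
      · have hdist : gdist W i v ≠ 0 := fun h => hi ⟨h, hiv⟩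
        simp [hi, hiv, hdist]
  · simp [huv]

theorem adjugate_zeroWeightMatrix_X_ne_zero [IsDomain R] {W : V → V → ℕ∞} {u v : V}
    (huv : gdist W u v = 0) :
    (zeroWeightMatrix W (MvPolynomial.X (R := R))).adjugate u v ≠ 0 := by
  obtain ⟨Z, hZ⟩ := exists_adjugate_zeroWeightMatrix_ne_zero (R := R) huv
  rw [← eval_adjugate_zeroWeightMatrix_X] at hZ
  exact ne_zero_of_map hZ

end SymbolicAdjacencyMatrix

open scoped Classical in
theorem card_eval_eq_zero_le {σ R : Type*} [Fintype σ] [DecidableEq σ] [CommRing R]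
    [IsDomain R] {P : MvPolynomial σ R} (hP : P ≠ 0) {S : Finset R} (hS : S.Nonempty) :
    ((Finset.univ.filter fun Z : σ → S => MvPolynomial.eval (fun e => (Z e : R)) P = 0).card : ℝ) ≤
      P.totalDegree / S.card * Fintype.card (σ → S) := by
  let e := Fintype.equivFin σ
  have hcard : (Finset.univ.filter fun Z : σ → S =>
      MvPolynomial.eval (fun i => (Z i : R)) P = 0).card =
      ((Fintype.piFinset fun _ => S).filter fun f : Fin (Fintype.card σ) → R =>
        MvPolynomial.eval f (MvPolynomial.renameEquiv R e P) = 0).card := by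
    refine Finset.card_bij (fun Z _ k => (Z (e.symm k) : R)) (fun Z hZ => ?_)
      (fun Z _ Z' _ h => ?_) (fun f hf => ?_)
    · simpa [MvPolynomial.eval_rename, Function.comp_def] using hZ
    · ext i
      simpa using congrFun h (e i)
    · simp only [Finset.mem_filter, Fintype.mem_piFinset] at hf
      refine ⟨fun i => ⟨f (e i), hf.1 (e i)⟩, ?_, by simp⟩
      simpa [MvPolynomial.eval_rename, Function.comp_def] using hf.2
  have hrename : MvPolynomial.renameEquiv R e P ≠ 0 :=
    (map_ne_zero_iff _ (MvPolynomial.renameEquiv R e).injective).mpr hP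
  have hzippel := (NNRat.cast_le (K := ℝ)).mpr (MvPolynomial.schwartz_zippel_totalDegree hrename S)
  have hpos : (0 : ℝ) < (S.card : ℝ) ^ Fintype.card σ :=
    pow_pos (Nat.cast_pos.mpr hS.card_pos) _
  push_cast [MvPolynomial.totalDegree_renameEquiv] at hzippel
  rw [div_le_iff₀ hpos, ← hcard] at hzippel
  simpa using hzippel

open scoped Classical in
theorem le_card_eval_ne_zero {σ R : Type*} [Fintype σ] [DecidableEq σ] [CommRing R]
    [IsDomain R] {P : MvPolynomial σ R} (hP : P ≠ 0) {S : Finset R} (hS : S.Nonempty) :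
    ((1 : ℝ) - P.totalDegree / S.card) * Fintype.card (σ → S) ≤
      (Finset.univ.filter fun Z : σ → S => MvPolynomial.eval (fun e => (Z e : R)) P ≠ 0).card := by
  have hsplit := congrArg (Nat.cast (R := ℝ)) <|
    Finset.card_filter_add_card_filter_not (s := Finset.univ)
      (fun Z : σ → S => MvPolynomial.eval (fun e => (Z e : R)) P = 0)
  rw [Finset.card_univ, Nat.cast_add] at hsplit
  linarith [card_eval_eq_zero_le hP hS]

open scoped Classical in
theorem random_substitution_trailingDegree_eq_dist_general {V R : Type*} [Fintype V]
    [DecidableEq V] [CommRing R] [IsDomain R] (W : V → V → ℕ∞) (S : Finset R) (hS : S.Nonempty)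
    (u v : V) (huv : gdist W u v ≠ ⊤) :
    ((1 : ℝ) - ((Fintype.card V : ℝ) - 1) / (S.card : ℝ)) * Fintype.card (V × V → S) ≤
      ((Finset.univ.filter fun Z : V × V → S =>
        ((symbAdj W fun e => (Z e : R)).adjugate u v).trailingDegree =
          gdist W u v).card : ℝ) := by
  obtain ⟨p, hp, hpv, hpu⟩ := exists_isPotential_eq_gdist huv
  set P := (zeroWeightMatrix (reweight W p) (MvPolynomial.X (R := R))).adjugate u v
  have hP : P ≠ 0 := adjugate_zeroWeightMatrix_X_ne_zero (hp.gdist_reweight_eq_zero hpv hpu)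
  have hdeg : (P.totalDegree : ℝ) ≤ (Fintype.card V : ℝ) - 1 := by
    rw [le_sub_iff_add_le]
    exact_mod_cast totalDegree_adjugate_lt_card (totalDegree_zeroWeightMatrix_X_le _) u v
  calc (1 - ((Fintype.card V : ℝ) - 1) / S.card) * Fintype.card (V × V → S)
      ≤ (1 - P.totalDegree / S.card) * Fintype.card (V × V → S) := by gcongr
    _ ≤ (Finset.univ.filter fun Z : V × V → S =>
          MvPolynomial.eval (fun e => (Z e : R)) P ≠ 0).card := le_card_eval_ne_zero hP hS
    _ ≤ _ := by
      gcongr with Z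
      intro hZ
      rw [eval_adjugate_zeroWeightMatrix_X] at hZ
      rw [hp.trailingDegree_adjugate_symbAdj hpv hZ, hpu]

open scoped Classical in
theorem random_substitution_trailingDegree_eq_dist {F : Type*} [Field F] {n : ℕ}
    (W : Fin n → Fin n → ℕ∞) (hpos : ∀ i j, W i j ≠ 0) (hloop : ∀ i, W i i = ⊤)
    (S : Finset F) (hS : S.Nonempty) (u v : Fin n) (huv : gdist W u v ≠ ⊤) :
    ((1 : ℝ) - (n : ℝ) / (S.card : ℝ)) * Fintype.card (Fin n × Fin n → S) ≤
      ((Finset.univ.filter fun Z : Fin n × Fin n → S =>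
        ((symbAdjZ W fun e => (Z e : F)).adjugate u v).trailingDegree =
          gdist W u v).card : ℝ) := by
  exact le_trans (by gcongr; simp)
    (random_substitution_trailingDegree_eq_dist_general W S hS u v huv)
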